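/- Let W = (BB^⊤)^{−1} with entries W_{i,j}. Define g̃_i^{(r)} by: g̃_1^{(r)} = 0 for all r ≥ 1; g̃_i^{(1)} = F̃_i·W_{i−1,i−1} for i = 2,…,N; and g̃_i^{(r)} = F̃_i·g̃_{i−1}^{(r)} + B̌_{i−1}·g̃_i^{(r−1)} + Σ_{k=1}^{r−1} g̃_{i−1}^{(k)}·g̃_i^{(r−k)} for i = 2,…,N and r ≥ 2. Then for every i = 1,…,N and every integer M ≥ 2, g̃_i^{(M)} = Σ_{j_1=1}^{i−1} ⋯ Σ_{j_{M−1}=1}^{i−1} W_{i,j_1}·W_{j_1,j_2}·⋯·W_{j_{M−2},j_{M−1}}·W_{j_{M−1},i}. -/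

import Mathlib

open Matrix

/-! For `S` a set of indices, let `G_S(a, b) = ∑ₙ κₙ Xⁿ`, where `κₙ` is the sum of the `W`-weights
of the walks from `a` to `b` whose `n` interior vertices lie in `S`. Splitting a walk at its first
visit to a new vertex `p` gives `G_{S ∪ {p}}(a, b) = G_S(a, b) + X · G_S(a, p) · G_{S ∪ {p}}(p, b)`.
For `W = (B Bᵀ)⁻¹` with `B` upper bidiagonal, `Bᵀ W = B⁻¹` is upper triangular, so column
`i = p + 1` of `W` is, above the diagonal, a multiple of column `p`; hence `G_{<i}(i, i)` is
`F̃_i · G_{<i}(p, p)` plus the constant `1 / q_i`. The recurrence for `g̃` says precisely that its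
generating series `∑ₙ g̃_i^{(n+1)} Xⁿ` solves the same linear equation as `F̃_i · G_{<i}(p, p)`, and
the solution is unique because `1 - X · φ` is always an invertible power series. -/

section Walks

open Finset.HasAntidiagonal (antidiagonal)
open PowerSeries

variable {ι R : Type*} [CommSemiring R] (W : Matrix ι ι R)

/-- The sum of the `W`-weights of the walks from `a` to `b` with exactly `n` interior vertices, all
of them in `S`. Repeated vertices and loops are allowed, so the walk has `n + 1` steps. -/
def walkSum (S : Finset ι) (n : ℕ) (a b : ι) : R :=
  ∑ j ∈ Fintype.piFinset fun _ : Fin n ↦ S,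
    ∏ k : Fin (n + 1), W (Fin.cons (α := fun _ ↦ ι) a j k) (Fin.snoc (α := fun _ ↦ ι) j b k)

/-- The generating series of `walkSum`, with the number of interior vertices as exponent. -/
def walkSeries (S : Finset ι) (a b : ι) : R⟦X⟧ :=
  mk fun n ↦ walkSum W S n a b

@[simp]
theorem coeff_walkSeries (S : Finset ι) (n : ℕ) (a b : ι) :
    coeff n (walkSeries W S a b) = walkSum W S n a b :=
  coeff_mk _ _

@[simp]
theorem walkSum_zero (S : Finset ι) (a b : ι) : walkSum W S 0 a b = W a b := by
  simp [walkSum, Fin.snoc]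

@[simp]
theorem constantCoeff_walkSeries (S : Finset ι) (a b : ι) :
    constantCoeff (walkSeries W S a b) = W a b := by
  rw [← coeff_zero_eq_constantCoeff_apply, coeff_walkSeries, walkSum_zero]

theorem walkSum_succ (S : Finset ι) (n : ℕ) (a b : ι) :
    walkSum W S (n + 1) a b = ∑ x ∈ S, W a x * walkSum W S n x b := by
  simp only [walkSum, Finset.mul_sum, ← Finset.sum_product']
  symm
  refine Finset.sum_equiv (Fin.consEquiv fun _ ↦ ι) (fun ⟨x, j⟩ ↦ ?_) fun ⟨x, j⟩ _ ↦ ?_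
  · simp [Fin.consEquiv, Fin.forall_fin_succ]
  · simp [Fin.consEquiv, Fin.prod_univ_succ (n := n + 1), ← Fin.cons_snoc_eq_snoc_cons]

theorem walkSeries_empty (a b : ι) : walkSeries W ∅ a b = C (W a b) := by
  ext (_ | n) <;> simp [walkSum_succ, coeff_C]

theorem walkSum_insert_succ [DecidableEq ι] {S : Finset ι} {p : ι} (hp : p ∉ S) (n : ℕ)
    (a b : ι) :
    walkSum W (insert p S) (n + 1) a b = walkSum W S (n + 1) a b +
      ∑ kl ∈ antidiagonal n, walkSum W S kl.1 a p * walkSum W (insert p S) kl.2 p b := by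
  induction n generalizing a with
  | zero => simp [walkSum_succ, Finset.sum_insert hp, add_comm]
  | succ n ih =>
    rw [walkSum_succ, Finset.sum_insert hp, Finset.Nat.sum_antidiagonal_succ]
    simp only [ih, walkSum_succ W S _ a, walkSum_zero, mul_add, Finset.sum_add_distrib,
      Finset.mul_sum, Finset.sum_mul, mul_assoc]
    rw [Finset.sum_comm]
    ring

theorem walkSeries_insert [DecidableEq ι] {S : Finset ι} {p : ι} (hp : p ∉ S) (a b : ι) :
    walkSeries W (insert p S) a b = walkSeries W S a b +
      X * (walkSeries W S a p * walkSeries W (insert p S) p b) := by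
  ext (_ | n)
  · simp
  · rw [map_add, coeff_succ_X_mul, coeff_mul]
    simp only [coeff_walkSeries, walkSum_insert_succ W hp]

variable {W}

theorem walkSum_eq_mul_of_col_eq_mul {S : Finset ι} {i p : ι} {c : R}
    (hcol : ∀ x ∈ S, W x i = c * W x p) (n : ℕ) {a : ι} (ha : a ∈ S) :
    walkSum W S n a i = c * walkSum W S n a p := by
  induction n generalizing a with
  | zero => simpa only [walkSum_zero] using hcol a ha
  | succ n ih =>
    simp only [walkSum_succ, Finset.mul_sum]
    exact Finset.sum_congr rfl fun x hx ↦ by rw [ih hx, mul_left_comm]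

theorem walkSum_succ_eq_mul_of_row_eq_mul {S : Finset ι} {i p : ι} {c : R}
    (hrow : ∀ x ∈ S, W i x = c * W p x) (n : ℕ) (b : ι) :
    walkSum W S (n + 1) i b = c * walkSum W S (n + 1) p b := by
  simp only [walkSum_succ, Finset.mul_sum]
  exact Finset.sum_congr rfl fun x hx ↦ by rw [hrow x hx, mul_assoc]

theorem walkSeries_self_eq_of_isSymm {S : Finset ι} {i p : ι} {c β : R} (hW : W.IsSymm)
    (hp : p ∈ S) (hcol : ∀ x ∈ S, W x i = c * W x p) (hdiag : W i i = c ^ 2 * W p p + β) :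
    walkSeries W S i i = C (c ^ 2) * walkSeries W S p p + C β := by
  have hrow : ∀ x ∈ S, W i x = c * W p x := fun x hx ↦ by
    rw [← hW.apply, hcol x hx, hW.apply]
  ext (_ | n)
  · simpa using hdiag
  · simp [-map_pow, walkSum_succ_eq_mul_of_row_eq_mul hrow,
      walkSum_eq_mul_of_col_eq_mul hcol _ hp, pow_two, mul_assoc]

variable (W) in
theorem walkSum_eq_sum_prod_range [Fintype ι] (S : Finset ι) [DecidablePred (· ∈ S)] (n : ℕ)
    (a b : ι) (c : (Fin n → ι) → ℕ → ι) (hzero : ∀ j, c j 0 = a)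
    (hinterior : ∀ j (k : Fin n), c j (k + 1) = j k) (hlast : ∀ j, c j (n + 1) = b) :
    walkSum W S n a b = ∑ j : Fin n → ι with ∀ k, j k ∈ S,
      ∏ k ∈ Finset.range (n + 1), W (c j k) (c j (k + 1)) := by
  refine Finset.sum_congr (by ext; simp) fun j _ ↦ ?_
  rw [Finset.prod_range]
  refine Finset.prod_congr rfl fun k _ ↦ congrArg₂ W ?_ ?_
  · cases k using Fin.cases <;> simp [hzero, hinterior]
  · cases k using Fin.lastCases <;> simp [hinterior, hlast]

end Walks

section Recurrence

open PowerSeries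

variable {R : Type*}

theorem coeff_mk_succ_mul_mk_succ [Semiring R] (g h : ℕ → R) (n : ℕ) :
    coeff n ((mk fun n ↦ g (n + 1)) * mk fun n ↦ h (n + 1)) =
      ∑ k ∈ Finset.Icc 1 (n + 1), g k * h (n + 2 - k) := by
  simp only [coeff_mul, coeff_mk]
  rw [Finset.Nat.sum_antidiagonal_eq_sum_range_succ fun k l ↦ g (k + 1) * h (l + 1),
    ← Finset.Ico_add_one_right_eq_Icc, Finset.sum_Ico_eq_sum_range]
  refine Finset.sum_congr rfl fun k hk ↦ ?_
  have hkn : k < n + 1 := Finset.mem_range.1 hk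
  rw [add_comm 1 k, show n + 2 - (k + 1) = n - k + 1 by lia]

theorem eq_C_mul_of_eq_add_X_mul [CommRing R] {f : R} {A G H : R⟦X⟧}
    (hG : G = C f * A + X * (A * G)) (hH : H = A + X * (A * H)) : G = C f * H := by
  have hunit : IsUnit (1 - X * A) := by simp [isUnit_iff_constantCoeff]
  refine hunit.mul_left_cancel ?_
  linear_combination hG - C f * hH

theorem mk_succ_eq_of_convolution_recurrence [CommSemiring R] {f β : R} {g h : ℕ → R}
    (hone : h 1 = f * (g 1 + β))
    (hrec : ∀ r, 2 ≤ r → h r = f * g r + β * h (r - 1) +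
      ∑ k ∈ Finset.Icc 1 (r - 1), g k * h (r - k)) :
    mk (fun n ↦ h (n + 1)) = C f * (mk (fun n ↦ g (n + 1)) + C β) +
      X * ((mk (fun n ↦ g (n + 1)) + C β) * mk fun n ↦ h (n + 1)) := by
  ext (_ | n)
  · simpa using hone
  · simp only [map_add, mul_add, add_mul, coeff_C_mul, coeff_succ_X_mul, coeff_succ_C,
      coeff_mk_succ_mul_mk_succ, coeff_mk, hrec (n + 2) (by lia), Nat.add_one_sub_one]
    ring

end Recurrence

section Bidiagonal

variable {R K : Type*} [Field K] {N : ℕ}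

/-- The `N × N` upper bidiagonal matrix with diagonal `d` and superdiagonal `s`, read along the row
index: entry `(i, i)` is `d i` and entry `(i, i + 1)` is `s i`. -/
def upperBidiagonal [Zero R] (N : ℕ) (d s : ℕ → R) : Matrix (Fin N) (Fin N) R :=
  of fun i j ↦ if (j : ℕ) = i then d i else if (j : ℕ) = i + 1 then s i else 0

theorem isUpperTriangular_upperBidiagonal [Zero R] (d s : ℕ → R) :
    (upperBidiagonal N d s).IsUpperTriangular := fun i j (hij : j < i) ↦ by
  have : (j : ℕ) < i := hij
  simp [upperBidiagonal, show (j : ℕ) ≠ i by lia, show (j : ℕ) ≠ i + 1 by lia]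

theorem isUnit_det_upperBidiagonal {d : ℕ → K} (s : ℕ → K) (hd : ∀ i < N, d i ≠ 0) :
    IsUnit (upperBidiagonal N d s).det := by
  rw [det_of_isUpperTriangular (isUpperTriangular_upperBidiagonal d s), isUnit_iff_ne_zero,
    Finset.prod_ne_zero_iff]
  exact fun i _ ↦ by simpa [upperBidiagonal] using hd i i.2

theorem upperBidiagonal_transpose_mul_apply_zero [NonUnitalNonAssocSemiring R] {m : Type*}
    (d s : ℕ → R) (A : Matrix (Fin N) m R) {i : Fin N} (hi : (i : ℕ) = 0) (x : m) :
    ((upperBidiagonal N d s)ᵀ * A) i x = d i * A i x := by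
  rw [mul_apply, Fintype.sum_eq_single i fun k hk ↦ ?_]
  · simp [upperBidiagonal]
  · have := Fin.val_ne_of_ne hk
    simp [upperBidiagonal, hi, show 0 ≠ (k : ℕ) by lia]

theorem upperBidiagonal_transpose_mul_apply_succ [NonUnitalNonAssocSemiring R] {m : Type*}
    (d s : ℕ → R) (A : Matrix (Fin N) m R) {i p : Fin N} (hip : (i : ℕ) = p + 1) (x : m) :
    ((upperBidiagonal N d s)ᵀ * A) i x = s p * A p x + d i * A i x := by
  have hne : p ≠ i := fun h ↦ by simp [h] at hip
  rw [mul_apply, Fintype.sum_eq_add p i hne fun k ⟨hkp, hki⟩ ↦ ?_]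
  · simp [upperBidiagonal, hip]
  · have := Fin.val_ne_of_ne hkp
    have := Fin.val_ne_of_ne hki
    simp [upperBidiagonal, show (i : ℕ) ≠ k by lia, show (i : ℕ) ≠ k + 1 by lia]

theorem transpose_mul_inv_mul_transpose [CommRing R] {n : Type*} [Fintype n] [DecidableEq n]
    {A : Matrix n n R} (hA : IsUnit A.det) : Aᵀ * (A * Aᵀ)⁻¹ = A⁻¹ := by
  rw [Matrix.mul_inv_rev, mul_nonsing_inv_cancel_left _ _ (isUnit_det_transpose A hA)]

theorem isUpperTriangular_inv [CommRing R] {n : Type*} [Fintype n] [LinearOrder n]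
    {A : Matrix n n R} (hA : A.IsUpperTriangular) (hdet : IsUnit A.det) : A⁻¹.IsUpperTriangular :=
  have := invertibleOfIsUnitDet A hdet
  blockTriangular_inv_of_blockTriangular hA

theorem mul_inv_apply_self_of_isUpperTriangular [CommRing R] {n : Type*} [Fintype n] [LinearOrder n]
    {A : Matrix n n R} (hA : A.IsUpperTriangular) (hdet : IsUnit A.det) (i : n) :
    A i i * A⁻¹ i i = 1 := by
  rw [← one_apply_eq i, ← mul_nonsing_inv A hdet, mul_apply, Fintype.sum_eq_single i]
  intro k hk
  rcases hk.lt_or_gt with h | h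
  · rw [hA h, zero_mul]
  · rw [isUpperTriangular_inv hA hdet h, mul_zero]

/-- The matrix `W = (B Bᵀ)⁻¹` for `B` upper bidiagonal. -/
noncomputable def bidiagonalGramInv [CommRing R] (N : ℕ) (d s : ℕ → R) : Matrix (Fin N) (Fin N) R :=
  (upperBidiagonal N d s * (upperBidiagonal N d s)ᵀ)⁻¹

theorem isSymm_bidiagonalGramInv [CommRing R] (d s : ℕ → R) : (bidiagonalGramInv N d s).IsSymm :=
  (isSymm_mul_transpose_self _).inv

variable {d : ℕ → K} (s : ℕ → K) (hd : ∀ i < N, d i ≠ 0)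
include hd

theorem inv_upperBidiagonal_apply_self (i : Fin N) :
    (upperBidiagonal N d s)⁻¹ i i = (d i)⁻¹ := by
  have h := mul_inv_apply_self_of_isUpperTriangular (isUpperTriangular_upperBidiagonal d s)
    (isUnit_det_upperBidiagonal s hd) i
  refine eq_inv_of_mul_eq_one_right ?_
  simpa [upperBidiagonal] using h

theorem bidiagonalGramInv_apply_zero {i : Fin N} (hi : (i : ℕ) = 0) :
    bidiagonalGramInv N d s i i = 1 / d i ^ 2 := by
  have h := upperBidiagonal_transpose_mul_apply_zero d s (bidiagonalGramInv N d s) hi i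
  rw [bidiagonalGramInv, transpose_mul_inv_mul_transpose (isUnit_det_upperBidiagonal s hd),
    inv_upperBidiagonal_apply_self s hd] at h
  have := hd i i.2
  rw [bidiagonalGramInv]
  field_simp at h ⊢
  exact h.symm

theorem bidiagonalGramInv_row_succ {i p : Fin N} (hip : (i : ℕ) = p + 1) (x : Fin N) :
    s p * bidiagonalGramInv N d s p x + d i * bidiagonalGramInv N d s i x =
      (upperBidiagonal N d s)⁻¹ i x := by
  rw [← upperBidiagonal_transpose_mul_apply_succ d s _ hip, bidiagonalGramInv,
    transpose_mul_inv_mul_transpose (isUnit_det_upperBidiagonal s hd)]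

theorem bidiagonalGramInv_col_succ_of_lt {i p : Fin N} (hip : (i : ℕ) = p + 1) {x : Fin N}
    (hx : x < i) :
    bidiagonalGramInv N d s x i = -(s p / d i) * bidiagonalGramInv N d s x p := by
  have h := bidiagonalGramInv_row_succ s hd hip x
  rw [isUpperTriangular_inv (isUpperTriangular_upperBidiagonal d s)
    (isUnit_det_upperBidiagonal s hd) hx] at h
  have hdi := hd i i.2
  rw [← (isSymm_bidiagonalGramInv d s).apply x i, ← (isSymm_bidiagonalGramInv d s).apply x p]
  field_simp
  linear_combination h

theorem bidiagonalGramInv_apply_self_succ {i p : Fin N} (hip : (i : ℕ) = p + 1) :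
    bidiagonalGramInv N d s i i =
      (-(s p / d i)) ^ 2 * bidiagonalGramInv N d s p p + 1 / d i ^ 2 := by
  have hrow := bidiagonalGramInv_row_succ s hd hip i
  rw [inv_upperBidiagonal_apply_self s hd,
    bidiagonalGramInv_col_succ_of_lt s hd hip (show p < i from Fin.lt_def.2 (by lia))] at hrow
  have hdi := hd i i.2
  field_simp at hrow ⊢
  linear_combination hrow

end Bidiagonal

section Main

open PowerSeries

variable {K : Type*} [Field K] {N : ℕ}

theorem walkSeries_bidiagonalGramInv_zero {d : ℕ → K} (s : ℕ → K) (hd : ∀ i < N, d i ≠ 0)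
    {i : Fin N} (hi : (i : ℕ) = 0) :
    walkSeries (bidiagonalGramInv N d s) (Finset.Iio i) i i = C (1 / d i ^ 2) := by
  have hempty : Finset.Iio i = ∅ := by
    ext x
    simp [Fin.lt_def, hi]
  rw [hempty, walkSeries_empty, bidiagonalGramInv_apply_zero s hd hi]

theorem walkSeries_bidiagonalGramInv_succ {d : ℕ → K} (s : ℕ → K) (hd : ∀ i < N, d i ≠ 0)
    {i p : Fin N} (hip : (i : ℕ) = p + 1) :
    walkSeries (bidiagonalGramInv N d s) (Finset.Iio i) i i =
      C (s p ^ 2 / d i ^ 2) * walkSeries (bidiagonalGramInv N d s) (Finset.Iio i) p p +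
        C (1 / d i ^ 2) := by
  rw [walkSeries_self_eq_of_isSymm (isSymm_bidiagonalGramInv d s)
    (Finset.mem_Iio.2 (Fin.lt_def.2 (by lia)))
    (fun x hx ↦ bidiagonalGramInv_col_succ_of_lt s hd hip (Finset.mem_Iio.1 hx))
    (bidiagonalGramInv_apply_self_succ s hd hip), neg_sq, div_pow]

theorem walkSeries_bidiagonalGramInv_eq_mk {q e d s : ℕ → K} (hd : ∀ i < N, d i ≠ 0)
    (hdq : ∀ i < N, d i ^ 2 = q i) (hse : ∀ i, i + 1 < N → s i ^ 2 = e i) {gt : ℕ → ℕ → K}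
    (hgt0 : ∀ r, 1 ≤ r → gt r 0 = 0)
    (hgt1 : ∀ i (h1 : 0 < i) (h2 : i < N), gt 1 i =
      e (i - 1) / q i * bidiagonalGramInv N d s ⟨i - 1, by lia⟩ ⟨i - 1, by lia⟩)
    (hgtr : ∀ r, 2 ≤ r → ∀ i, 0 < i → i < N →
      gt r i = e (i - 1) / q i * gt r (i - 1) + 1 / q (i - 1) * gt (r - 1) i
        + ∑ k ∈ Finset.Icc 1 (r - 1), gt k (i - 1) * gt (r - k) i)
    (i : ℕ) (hi : i < N) :
    walkSeries (bidiagonalGramInv N d s) (Finset.Iio ⟨i, hi⟩) ⟨i, hi⟩ ⟨i, hi⟩ =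
      mk (fun n ↦ gt (n + 1) i) + C (1 / q i) := by
  induction i with
  | zero =>
    have hgt : mk (fun n ↦ gt (n + 1) 0) = 0 := by ext n; simp [hgt0]
    rw [walkSeries_bidiagonalGramInv_zero s hd rfl, hgt, zero_add, hdq 0 hi]
  | succ p ih =>
    specialize ih (by lia)
    have hIio : Finset.Iio (⟨p + 1, hi⟩ : Fin N) =
        insert ⟨p, by lia⟩ (Finset.Iio ⟨p, by lia⟩) := by
      ext x
      simp only [Finset.mem_insert, Finset.mem_Iio, Fin.lt_def, Fin.ext_iff]
      lia
    have hWpp : bidiagonalGramInv N d s ⟨p, by lia⟩ ⟨p, by lia⟩ = gt 1 p + 1 / q p := by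
      simpa using congrArg (coeff 0) ih
    have hrec := mk_succ_eq_of_convolution_recurrence
      (by rw [hgt1 (p + 1) p.succ_pos hi]; exact congrArg _ hWpp)
      fun r hr ↦ hgtr r hr (p + 1) p.succ_pos hi
    have hinsert := walkSeries_insert (bidiagonalGramInv N d s)
      (Finset.notMem_Iio_self (b := (⟨p, by lia⟩ : Fin N))) ⟨p, by lia⟩ ⟨p, by lia⟩
    rw [Nat.add_sub_cancel, ← ih] at hrec
    rw [← hIio] at hinsert
    rw [walkSeries_bidiagonalGramInv_succ s hd (p := ⟨p, by lia⟩) rfl, hse p hi, hdq _ hi,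
      eq_C_mul_of_eq_add_X_mul hrec hinsert]

theorem stmt_6_general {q e d s : ℕ → K} (hd : ∀ i < N, d i ≠ 0)
    (hdq : ∀ i < N, d i ^ 2 = q i) (hse : ∀ i, i + 1 < N → s i ^ 2 = e i)
    (B : Matrix (Fin N) (Fin N) K)
    (hB : ∀ i j : Fin N, B i j =
      if (j : ℕ) = i then d i else if (j : ℕ) = i + 1 then s i else 0)
    (W : Matrix (Fin N) (Fin N) K) (hW : W = (B * Bᵀ)⁻¹) (gt : ℕ → ℕ → K)
    (hgt0 : ∀ r, 1 ≤ r → gt r 0 = 0)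
    (hgt1 : ∀ i (h1 : 0 < i) (h2 : i < N),
      gt 1 i = e (i - 1) / q i * W ⟨i - 1, by lia⟩ ⟨i - 1, by lia⟩)
    (hgtr : ∀ r, 2 ≤ r → ∀ i, 0 < i → i < N →
      gt r i = e (i - 1) / q i * gt r (i - 1) + 1 / q (i - 1) * gt (r - 1) i
        + ∑ k ∈ Finset.Icc 1 (r - 1), gt k (i - 1) * gt (r - k) i)
    (i : ℕ) (hi : i < N) (M : ℕ) (hM : 2 ≤ M) :
    gt M i =
      ∑ j ∈ Finset.univ.filter (fun j : Fin (M - 1) → Fin N => ∀ k, (j k : ℕ) < i),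
        (fun c : ℕ → Fin N => ∏ k ∈ Finset.range M, W (c k) (c (k + 1)))
          (fun t => if h : 1 ≤ t ∧ t ≤ M - 1 then j ⟨t - 1, by lia⟩ else ⟨i, hi⟩) := by
  obtain ⟨n, rfl⟩ := Nat.exists_eq_add_of_le' hM
  obtain rfl : B = upperBidiagonal N d s := Matrix.ext hB
  obtain rfl : W = bidiagonalGramInv N d s := hW
  have hgt := congrArg (coeff (n + 1))
    (walkSeries_bidiagonalGramInv_eq_mk hd hdq hse hgt0 hgt1 hgtr i hi)
  have hwalk : gt (n + 2) i =
      walkSum (bidiagonalGramInv N d s) (Finset.Iio ⟨i, hi⟩) (n + 1) ⟨i, hi⟩ ⟨i, hi⟩ := by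
    simpa [coeff_C] using hgt.symm
  rw [hwalk, walkSum_eq_sum_prod_range _ _ _ _ _
    (fun j t ↦ if h : 1 ≤ t ∧ t ≤ n + 1 then j ⟨t - 1, by lia⟩ else ⟨i, hi⟩)
    (by simp) (fun j k ↦ dif_pos ⟨by lia, by lia⟩) (by simp)]
  simp only [Finset.mem_Iio, Fin.lt_def]
  rfl

end Main

/-- matrix-theoretic interpretation of the quantities `g̃_i^{(M)}`:
`g̃_i^{(M)} = Σ_{j_1<i} ⋯ Σ_{j_{M-1}<i} W_{i,j_1} W_{j_1,j_2} ⋯ W_{j_{M-1},i}`,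
where `W = (BBᵀ)⁻¹`. Indices are 0-based: the paper's 1-based `g̃_i^{(r)}` is
`gt r (i-1)`; `B̌_i = 1/q_i` is `1 / q (i-1)`; `F̃_i = e_{i-1}/q_i` is
`e (i-2) / q (i-1)`; the paper's range `1 ≤ j_k ≤ i-1` becomes `(j k : ℕ) < i`.
The chain product is encoded via the sequence `c` with `c 0 = c M = i` and
`c t = j_t` for `1 ≤ t ≤ M-1`. -/
theorem stmt_6 (N : ℕ) (hN : 0 < N) (q e : ℕ → ℝ)
    (hq : ∀ i, i < N → 0 < q i) (he : ∀ i, i + 1 < N → 0 < e i)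
    (B : Matrix (Fin N) (Fin N) ℝ)
    (hB : ∀ i j : Fin N, B i j =
      if (j : ℕ) = (i : ℕ) then Real.sqrt (q i)
      else if (j : ℕ) = (i : ℕ) + 1 then Real.sqrt (e i) else 0)
    (W : Matrix (Fin N) (Fin N) ℝ) (hW : W = (B * Bᵀ)⁻¹)
    (gt : ℕ → ℕ → ℝ)
    (hgt0 : ∀ r, 1 ≤ r → gt r 0 = 0)
    (hgt1 : ∀ i (h1 : 0 < i) (h2 : i < N),
      gt 1 i = e (i - 1) / q i * W ⟨i - 1, by omega⟩ ⟨i - 1, by omega⟩)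
    (hgtr : ∀ r, 2 ≤ r → ∀ i, 0 < i → i < N →
      gt r i = e (i - 1) / q i * gt r (i - 1) + 1 / q (i - 1) * gt (r - 1) i
        + ∑ k ∈ Finset.Icc 1 (r - 1), gt k (i - 1) * gt (r - k) i) :
    ∀ i (hi : i < N), ∀ M, 2 ≤ M →
      gt M i =
        ∑ j ∈ Finset.univ.filter (fun j : Fin (M - 1) → Fin N => ∀ k, (j k : ℕ) < i),
          (fun c : ℕ → Fin N => ∏ k ∈ Finset.range M, W (c k) (c (k + 1)))
            (fun t => if h : 1 ≤ t ∧ t ≤ M - 1 then j ⟨t - 1, by omega⟩ else ⟨i, hi⟩) :=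
  stmt_6_general (fun i hi ↦ (Real.sqrt_pos.2 (hq i hi)).ne') (fun i hi ↦ Real.sq_sqrt (hq i hi).le)
    (fun i hi ↦ Real.sq_sqrt (he i hi).le) B hB W hW gt hgt0 hgt1 hgtr
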